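/- For every η > 0 and H ∈ (0,1) there exists a constant C < ∞ such that for every λ ≥ 1, ∫_{ℝ×ℝ²} |𝐤|⁴ · (η² + ξ² + |𝐤|²)^{−H−3/2} · (1 + λ^{−2}(ξ² + |𝐤|²))^{−2} dξ d𝐤 ≤ C·λ^{4−2H}, where the integration variable is (ξ, 𝐤) ∈ ℝ × ℝ² and |𝐤| denotes the Euclidean norm on ℝ². -/

import Mathlib

open MeasureTheory

/-- The scale-invariant radial profile majorizing the spectral integrand. -/
noncomputable def radialProfile (H t : ℝ) : ℝ :=
  t ^ 4 * (t ^ 2) ^ (-H - 3 / 2 : ℝ) * (1 + t ^ 2) ^ (-2 : ℝ)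

lemma radialProfile_nonneg (H t : ℝ) : 0 ≤ radialProfile H t := by
  unfold radialProfile
  positivity

lemma continuousOn_radialProfile (H : ℝ) :
    ContinuousOn (radialProfile H) (Set.Ioi 0) := by
  have h1 : ContinuousOn (fun t : ℝ => (t ^ 2) ^ (-H - 3 / 2 : ℝ)) (Set.Ioi 0) :=
    ContinuousOn.rpow_const (by fun_prop) fun t ht =>
      Or.inl (pow_ne_zero 2 (ne_of_gt ht))
  have h2 : ContinuousOn (fun t : ℝ => (1 + t ^ 2) ^ (-2 : ℝ)) (Set.Ioi 0) :=
    ContinuousOn.rpow_const (by fun_prop) fun t _ => Or.inl (by positivity)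
  exact ((continuousOn_pow 4).mul h1).mul h2

lemma sq_mul_radialProfile_le {H t : ℝ} (hH : H < 3 / 2) (ht : 0 < t) :
    t ^ 2 * radialProfile H t ≤ (1 + t ^ 2) ^ (-(1 + 2 * H) / 2) := by
  have hs : 0 < t ^ 2 := by positivity
  have h1 : t ^ 2 * radialProfile H t =
      (t ^ 2) ^ (3 / 2 - H) * (1 + t ^ 2) ^ (-2 : ℝ) := by
    have h : (t ^ 2) ^ (3 / 2 - H) = (t ^ 2) ^ (3 : ℕ) * (t ^ 2) ^ (-H - 3 / 2 : ℝ) := by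
      rw [← Real.rpow_natCast (t ^ 2) 3, ← Real.rpow_add hs]
      congr 1
      push_cast
      ring
    rw [h, radialProfile]
    ring
  have h2 : (1 + t ^ 2) ^ (-(1 + 2 * H) / 2) =
      (1 + t ^ 2) ^ (3 / 2 - H) * (1 + t ^ 2) ^ (-2 : ℝ) := by
    rw [← Real.rpow_add (by positivity)]
    congr 1
    ring
  rw [h1, h2]
  exact mul_le_mul_of_nonneg_right
    (Real.rpow_le_rpow hs.le (by linarith) (by linarith)) (by positivity)

lemma integrable_radialProfile_norm {E : Type*} [NormedAddCommGroup E] [NormedSpace ℝ E]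
    [FiniteDimensional ℝ E] [MeasurableSpace E] [BorelSpace E] (μ : Measure E)
    [μ.IsAddHaarMeasure] (hE : Module.finrank ℝ E = 3) {H : ℝ}
    (hH : H ∈ Set.Ioo (0 : ℝ) (3 / 2)) :
    Integrable (fun x : E => radialProfile H ‖x‖) μ := by
  have : Nontrivial E := Module.nontrivial_of_finrank_pos (R := ℝ) (by omega)
  rw [integrable_fun_norm_addHaar μ (f := radialProfile H), hE]
  have hdom : Integrable (fun t : ℝ => (1 + ‖t‖ ^ 2) ^ (-(1 + 2 * H) / 2)) :=
    integrable_rpow_neg_one_add_norm_sq (by simpa using hH.1)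
  refine hdom.integrableOn.mono' ?_ ?_
  · exact ((continuousOn_pow 2).mul (continuousOn_radialProfile H)).aestronglyMeasurable
      measurableSet_Ioi
  · filter_upwards [ae_restrict_mem measurableSet_Ioi] with t ht
    have h0 : 0 ≤ t ^ 2 * radialProfile H t :=
      mul_nonneg (by positivity) (radialProfile_nonneg H t)
    rw [smul_eq_mul, Real.norm_of_nonneg h0, Real.norm_eq_abs, sq_abs]
    exact sq_mul_radialProfile_le hH.2 ht

lemma rpow_mul_radialProfile_inv_mul {H r N : ℝ} (hr : 0 < r) :
    r ^ (1 - 2 * H) * radialProfile H (r⁻¹ * N) =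
      N ^ 4 * (N ^ 2) ^ (-H - 3 / 2 : ℝ) * (1 + r⁻¹ ^ 2 * N ^ 2) ^ (-2 : ℝ) := by
  have h1 : (r⁻¹ ^ 2) ^ (-H - 3 / 2 : ℝ) = r ^ (2 * H + 3) := by
    rw [inv_pow, Real.inv_rpow (by positivity), ← Real.rpow_neg (by positivity),
      ← Real.rpow_natCast r 2, ← Real.rpow_mul hr.le]
    congr 1
    push_cast
    ring
  have h2 : r ^ (1 - 2 * H) * r ^ (2 * H + 3) = r ^ 4 := by
    rw [← Real.rpow_add hr, ← Real.rpow_natCast r 4]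
    congr 1
    push_cast
    ring
  have h3 : r ^ 4 * r⁻¹ ^ 4 = 1 := by
    rw [← mul_pow, mul_inv_cancel₀ hr.ne', one_pow]
  rw [radialProfile, mul_pow, mul_pow, Real.mul_rpow (by positivity) (by positivity), h1]
  linear_combination (r⁻¹ ^ 4 * N ^ 4 * (N ^ 2) ^ (-H - 3 / 2 : ℝ) *
    (1 + r⁻¹ ^ 2 * N ^ 2) ^ (-2 : ℝ)) * h2 + (N ^ 4 * (N ^ 2) ^ (-H - 3 / 2 : ℝ) *
    (1 + r⁻¹ ^ 2 * N ^ 2) ^ (-2 : ℝ)) * h3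

lemma spectral_integrand_le {E : Type*} [NormedAddCommGroup E] [NormedSpace ℝ E]
    {H r : ℝ} (η : ℝ) (hH : -(3 / 2) ≤ H) (hr : 0 < r) (x : ℝ × E) :
    ‖x.2‖ ^ 4 * (η ^ 2 + x.1 ^ 2 + ‖x.2‖ ^ 2) ^ (-H - 3 / 2 : ℝ) *
        (1 + r⁻¹ ^ 2 * (x.1 ^ 2 + ‖x.2‖ ^ 2)) ^ (-2 : ℝ) ≤
      r ^ (1 - 2 * H) * radialProfile H ‖r⁻¹ • x‖ := by
  rw [norm_smul, Real.norm_of_nonneg (inv_nonneg.2 hr.le), rpow_mul_radialProfile_inv_mul hr]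
  rcases eq_or_ne x 0 with rfl | hx
  · simp
  have hpos : 0 < ‖x‖ := norm_pos_iff.2 hx
  have hle : ‖x‖ ^ 2 ≤ x.1 ^ 2 + ‖x.2‖ ^ 2 := by
    rw [Prod.norm_def]
    rcases max_choice ‖x.1‖ ‖x.2‖ with h | h <;> rw [h]
    · rw [Real.norm_eq_abs, sq_abs]
      nlinarith [sq_nonneg ‖x.2‖]
    · nlinarith [sq_nonneg x.1]
  refine mul_le_mul (mul_le_mul ?_ ?_ (by positivity) (by positivity)) ?_
    (by positivity) (by positivity)
  · exact pow_le_pow_left₀ (norm_nonneg _) (norm_snd_le x) 4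
  · exact Real.rpow_le_rpow_of_nonpos (by positivity) (by nlinarith [sq_nonneg η]) (by linarith)
  · exact Real.rpow_le_rpow_of_nonpos (by positivity) (by gcongr) (by norm_num)

/-- Spectral estimate behind Corollary 1 of the paper: for fixed `η > 0` and `H ∈ (0,1)`
there is a constant `C` such that for all `λ ≥ 1`,
`∫_{ℝ×ℝ²} |𝐤|⁴ (η² + ξ² + |𝐤|²)^{-H-3/2} (1 + λ⁻²(ξ² + |𝐤|²))^{-2} dξ d𝐤 ≤ C λ^{4-2H}`. -/
theorem stmt_3 (η H : ℝ) (hη : 0 < η) (hH : H ∈ Set.Ioo (0 : ℝ) 1) :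
    ∃ C : ℝ, 0 ≤ C ∧ ∀ lam : ℝ, 1 ≤ lam →
      (∫⁻ x : ℝ × EuclideanSpace ℝ (Fin 2),
          ENNReal.ofReal (‖x.2‖ ^ 4 * (η ^ 2 + x.1 ^ 2 + ‖x.2‖ ^ 2) ^ (-H - 3 / 2 : ℝ) *
            (1 + lam⁻¹ ^ 2 * (x.1 ^ 2 + ‖x.2‖ ^ 2)) ^ (-2 : ℝ)))
        ≤ ENNReal.ofReal (C * lam ^ (4 - 2 * H)) := by
  have hdim : Module.finrank ℝ (ℝ × EuclideanSpace ℝ (Fin 2)) = 3 := by simp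
  have : (volume : Measure (ℝ × EuclideanSpace ℝ (Fin 2))).IsAddHaarMeasure :=
    Measure.prod.instIsAddHaarMeasure volume volume
  have hint : Integrable fun x : ℝ × EuclideanSpace ℝ (Fin 2) => radialProfile H ‖x‖ :=
    integrable_radialProfile_norm volume hdim ⟨hH.1, by linarith [hH.2]⟩
  refine ⟨∫ x : ℝ × EuclideanSpace ℝ (Fin 2), radialProfile H ‖x‖,
    integral_nonneg fun x => radialProfile_nonneg H _, fun lam hlam => ?_⟩
  have hpos : 0 < lam := by linarith
  refine (lintegral_mono fun x => ENNReal.ofReal_le_ofReal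
    (spectral_integrand_le η (by linarith [hH.1]) hpos x)).trans ?_
  rw [← ofReal_integral_eq_lintegral_ofReal
    ((hint.comp_smul (inv_ne_zero hpos.ne')).const_mul _)
    (Filter.Eventually.of_forall fun x =>
      mul_nonneg (by positivity) (radialProfile_nonneg H _)),
    integral_const_mul, Measure.integral_comp_inv_smul volume
      (fun x : ℝ × EuclideanSpace ℝ (Fin 2) => radialProfile H ‖x‖) lam, hdim,
    abs_of_pos (by positivity), smul_eq_mul]
  apply le_of_eq
  have hpow : lam ^ (4 - 2 * H) = lam ^ (1 - 2 * H) * lam ^ 3 := by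
    rw [← Real.rpow_natCast lam 3, ← Real.rpow_add hpos]
    congr 1
    push_cast
    ring
  rw [hpow]
  congr 1
  ring
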